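/- arXiv:2508.01883 — 5 statements merged into one kernel-verified Lean document; each statement's English description precedes it below -/
import Mathlib

section
/- For every real parameter τ > 0, the extended log-barrier function φ_τ is convex on ℝ. -/
/-- The extended log-barrier function φ_τ. -/
noncomputable def phi (τ : ℝ) (x : ℝ) : ℝ :=
  if x ≤ -1 / τ ^ 2 then -(1 / τ) * Real.log (-x)
  else τ * x - (1 / τ) * Real.log (1 / τ ^ 2) + 1 / τ

section Gluing

variable {𝕜 : Type*} [Field 𝕜] [LinearOrder 𝕜] [IsStrictOrderedRing 𝕜]
  {s : Set 𝕜} {f g : 𝕜 → 𝕜} {c m : 𝕜}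

theorem antitoneOn_inter_Iic_of_convexOn_of_isMinOn (hf : ConvexOn 𝕜 s f) (hc : c ∈ s)
    (hmin : IsMinOn f s c) : AntitoneOn f (s ∩ Set.Iic c) := by
  rintro x ⟨hx, -⟩ y ⟨hy, hyc⟩ hxy
  obtain rfl | hyc := eq_or_lt_of_le hyc
  · exact hmin hx
  · exact hf.le_left_of_right_le'' hx hc hxy hyc (hmin hy)

theorem monotoneOn_inter_Ici_of_convexOn_of_isMinOn (hf : ConvexOn 𝕜 s f) (hc : c ∈ s)
    (hmin : IsMinOn f s c) : MonotoneOn f (s ∩ Set.Ici c) := by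
  rintro x ⟨hx, hcx⟩ y ⟨hy, -⟩ hxy
  obtain rfl | hcx := eq_or_lt_of_le hcx
  · exact hmin hy
  · exact hf.le_right_of_left_le'' hc hy hcx hxy (hmin hx)

theorem convexOn_univ_piecewise_Iic_of_isMinOn (hf : ConvexOn 𝕜 (Set.Iic c) f)
    (hg : ConvexOn 𝕜 (Set.Ici c) g) (hfg : f c = g c) (hf_min : IsMinOn f (Set.Iic c) c)
    (hg_min : IsMinOn g (Set.Ici c) c) :
    ConvexOn 𝕜 Set.univ ((Set.Iic c).piecewise f g) := by
  have hf_anti : AntitoneOn f (Set.Iic c) := by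
    simpa using antitoneOn_inter_Iic_of_convexOn_of_isMinOn hf Set.self_mem_Iic hf_min
  have hg_mono : MonotoneOn g (Set.Ici c) := by
    simpa using monotoneOn_inter_Ici_of_convexOn_of_isMinOn hg Set.self_mem_Ici hg_min
  exact convexOn_univ_piecewise_Iic_of_antitoneOn_Iic_monotoneOn_Ici hf hg hf_anti hg_mono hfg

-- Subtracting the common supporting line turns `c` into a minimum of both pieces.
theorem convexOn_univ_piecewise_Iic_of_supporting_line (hf : ConvexOn 𝕜 (Set.Iic c) f)
    (hg : ConvexOn 𝕜 (Set.Ici c) g) (hfg : f c = g c)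
    (hf_line : ∀ x ≤ c, f c + m * (x - c) ≤ f x) (hg_line : ∀ x ≥ c, g c + m * (x - c) ≤ g x) :
    ConvexOn 𝕜 Set.univ ((Set.Iic c).piecewise f g) := by
  let line : 𝕜 → 𝕜 := LinearMap.mulLeft 𝕜 m
  have hf_min : IsMinOn (f - line) (Set.Iic c) c := fun x hx => by
    change f c - m * c ≤ f x - m * x
    linarith [hf_line x hx]
  have hg_min : IsMinOn (g - line) (Set.Ici c) c := fun x hx => by
    change g c - m * c ≤ g x - m * x
    linarith [hg_line x hx]
  have h_sub : ConvexOn 𝕜 Set.univ ((Set.Iic c).piecewise (f - line) (g - line)) :=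
    convexOn_univ_piecewise_Iic_of_isMinOn
      (hf.sub ((LinearMap.mulLeft 𝕜 m).concaveOn (convex_Iic c)))
      (hg.sub ((LinearMap.mulLeft 𝕜 m).concaveOn (convex_Ici c)))
      (congrArg (· - line c) hfg) hf_min hg_min
  have h_add : (Set.Iic c).piecewise f g =
      (Set.Iic c).piecewise (f - line) (g - line) + line := by
    rw [Set.piecewise_sub, Set.piecewise_same, sub_add_cancel]
  rw [h_add]
  exact h_sub.add ((LinearMap.mulLeft 𝕜 m).convexOn convex_univ)

theorem convexOn_univ_piecewise_Iic_affine (hf : ConvexOn 𝕜 (Set.Iic c) f)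
    (hf_line : ∀ x ≤ c, f c + m * (x - c) ≤ f x) :
    ConvexOn 𝕜 Set.univ ((Set.Iic c).piecewise f fun x => f c + m * (x - c)) := by
  have h_affine : ConvexOn 𝕜 (Set.Ici c) fun x => f c + m * (x - c) := by
    convert! ((LinearMap.mulLeft 𝕜 m).convexOn (convex_Ici c)).add_const (f c - m * c) using 2
    simp only [Pi.add_apply, LinearMap.mulLeft_apply]
    ring
  exact convexOn_univ_piecewise_Iic_of_supporting_line hf h_affine (by simp) hf_line (by simp)

end Gluing

theorem convexOn_neg_mul_log_neg {a : ℝ} (ha : 0 ≤ a) :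
    ConvexOn ℝ (Set.Iio 0) fun x => -a * Real.log (-x) := by
  simpa [Real.log_neg_eq_log] using strictConcaveOn_log_Iio.concaveOn.neg.smul ha

theorem log_le_log_add_sub_div {x y : ℝ} (hx : 0 < x) (hy : 0 < y) :
    Real.log y ≤ Real.log x + (y - x) / x := by
  have h := Real.log_le_sub_one_of_pos (div_pos hy hx)
  rw [Real.log_div hy.ne' hx.ne', ← div_self hx.ne', ← sub_div] at h
  linarith

theorem tangent_le_neg_mul_log_neg {a c x : ℝ} (ha : 0 ≤ a) (hc : c < 0) (hx : x < 0) :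
    -a * Real.log (-c) + -a / c * (x - c) ≤ -a * Real.log (-x) := by
  have h := log_le_log_add_sub_div (neg_pos.2 hc) (neg_pos.2 hx)
  calc -a * Real.log (-c) + -a / c * (x - c)
      = -(a * (Real.log (-c) + (-x - -c) / -c)) := by ring
    _ ≤ -(a * Real.log (-x)) := by gcongr
    _ = -a * Real.log (-x) := by ring

theorem phi_eq_piecewise_tangent {τ : ℝ} (hτ : τ ≠ 0) :
    phi τ = (Set.Iic (-1 / τ ^ 2)).piecewise (fun x => -(1 / τ) * Real.log (-x))
      (fun x => -(1 / τ) * Real.log (-(-1 / τ ^ 2)) + τ * (x - -1 / τ ^ 2)) := by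
  ext x
  simp only [phi, Set.piecewise, Set.mem_Iic]
  congr 1
  rw [neg_div, neg_neg]
  field_simp
  ring

/-- For every τ > 0, the extended log-barrier function φ_τ is convex on ℝ. -/
theorem phi_convexOn (τ : ℝ) (hτ : 0 < τ) :
    ConvexOn ℝ Set.univ (phi τ) := by
  have ha : 0 ≤ 1 / τ := by positivity
  have hc : -1 / τ ^ 2 < 0 := div_neg_of_neg_of_pos neg_one_lt_zero (by positivity)
  have h_slope : -(1 / τ) / (-1 / τ ^ 2) = τ := by field_simp
  have h_convex : ConvexOn ℝ (Set.Iic (-1 / τ ^ 2)) fun x => -(1 / τ) * Real.log (-x) :=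
    (convexOn_neg_mul_log_neg ha).subset (Set.Iic_subset_Iio.2 hc) (convex_Iic _)
  rw [phi_eq_piecewise_tangent hτ.ne']
  refine convexOn_univ_piecewise_Iic_affine h_convex fun x hx => ?_
  simpa only [h_slope] using tangent_le_neg_mul_log_neg ha hc (hx.trans_lt hc)
end

section
/- Core inequality of the duality-gap theorem: for every real parameter τ > 0 and every g ∈ ℝ, the implicit dual variable λ_τ(g) is strictly positive, and -λ_τ(g)·g ≤ 1/τ. (Explicitly: if g ≤ -1/τ² then -λ_τ(g)·g = 1/τ; if -1/τ² < g ≤ 0 then -τ·g ≤ 1/τ; and if g > 0 then -τ·g ≤ 0 ≤ 1/τ.) -/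
/-- The implicit dual variable function λ_τ. -/
noncomputable def lam (τ : ℝ) (g : ℝ) : ℝ :=
  if g ≤ -1 / τ ^ 2 then -1 / (τ * g) else τ

section OrderedField

variable {K : Type*} [Field K] [LinearOrder K] [IsStrictOrderedRing K] {a x : K}

theorem neg_of_le_neg_one_div_sq (ha : a ≠ 0) (hx : x ≤ -1 / a ^ 2) : x < 0 :=
  hx.trans_lt (div_neg_of_neg_of_pos neg_one_lt_zero (sq_pos_of_ne_zero ha))

theorem neg_mul_le_one_div_iff (ha : 0 < a) : -(a * x) ≤ 1 / a ↔ -1 / a ^ 2 ≤ x :=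
  calc
    -(a * x) ≤ 1 / a ↔ -(a * x) * a ≤ 1 := le_div_iff₀ ha
    _ ↔ -1 ≤ x * a ^ 2 := by rw [neg_mul, neg_le, show a * x * a = x * a ^ 2 by ring]
    _ ↔ -1 / a ^ 2 ≤ x := (div_le_iff₀ (pow_pos ha 2)).symm

end OrderedField

section ImplicitDual

variable {τ g : ℝ}

theorem lam_of_le (hg : g ≤ -1 / τ ^ 2) : lam τ g = -1 / (τ * g) :=
  if_pos hg

theorem lam_of_lt (hg : -1 / τ ^ 2 < g) : lam τ g = τ :=
  if_neg hg.not_ge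

theorem lam_pos (hτ : 0 < τ) (g : ℝ) : 0 < lam τ g := by
  rcases le_or_gt g (-1 / τ ^ 2) with hle | hlt
  · have hg : g < 0 := neg_of_le_neg_one_div_sq hτ.ne' hle
    rw [lam_of_le hle]
    exact div_pos_of_neg_of_neg neg_one_lt_zero (mul_neg_of_pos_of_neg hτ hg)
  · rwa [lam_of_lt hlt]

theorem neg_lam_mul_eq_one_div (hτ : τ ≠ 0) (hg : g ≤ -1 / τ ^ 2) :
    -(lam τ g * g) = 1 / τ := by
  have hg₀ : g ≠ 0 := (neg_of_le_neg_one_div_sq hτ hg).ne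
  rw [lam_of_le hg]
  field_simp

theorem neg_lam_mul_le_one_div (hτ : 0 < τ) (g : ℝ) : -(lam τ g * g) ≤ 1 / τ := by
  rcases le_or_gt g (-1 / τ ^ 2) with hle | hlt
  · exact (neg_lam_mul_eq_one_div hτ.ne' hle).le
  · rw [lam_of_lt hlt]
    exact (neg_mul_le_one_div_iff hτ).mpr hlt.le

end ImplicitDual

/-- Core inequality of the duality-gap theorem: for every τ > 0 and every
g ∈ ℝ, the implicit dual variable λ_τ(g) is strictly positive and
-λ_τ(g)·g ≤ 1/τ; explicitly, if g ≤ -1/τ² then -λ_τ(g)·g = 1/τ, if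
-1/τ² < g ≤ 0 then -τ·g ≤ 1/τ, and if g > 0 then -τ·g ≤ 0 ≤ 1/τ. -/
theorem lam_pos_and_gap (τ : ℝ) (hτ : 0 < τ) (g : ℝ) :
    0 < lam τ g ∧ -(lam τ g * g) ≤ 1 / τ ∧
    (g ≤ -1 / τ ^ 2 → -(lam τ g * g) = 1 / τ) ∧
    (-1 / τ ^ 2 < g → g ≤ 0 → -(τ * g) ≤ 1 / τ) ∧
    (0 < g → -(τ * g) ≤ 0 ∧ (0 : ℝ) ≤ 1 / τ) := by
  exact ⟨lam_pos hτ g,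
    neg_lam_mul_le_one_div hτ g,
    neg_lam_mul_eq_one_div hτ.ne',
    fun hlt _ => (neg_mul_le_one_div_iff hτ).mpr hlt.le,
    fun hg => ⟨neg_nonpos.mpr (mul_pos hτ hg).le, one_div_nonneg.mpr hτ.le⟩⟩
end

section
/- Duality gap bound (Theorem 2, quantitative core): let τ > 0, η ≥ 0, m ∈ ℕ, and let g : Fin m → ℝ be constraint values, I : Fin m → ℝ intrinsic-reward values, and Imax : Fin m → ℝ with 0 ≤ I i ≤ Imax i for every i. Setting λ i = λ_τ(g i) for each i, the duality gap satisfies -∑_{i} λ i · g i + η·∑_{i} I i ≤ m/τ + η·∑_{i} Imax i. -/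
open Finset

theorem lam_mul_self_of_le {τ g : ℝ} (hτ : τ ≠ 0) (hg : g ≤ -1 / τ ^ 2) :
    lam τ g * g = -τ⁻¹ := by
  have threshold_neg : -1 / τ ^ 2 < 0 := div_neg_of_neg_of_pos neg_one_lt_zero (by positivity)
  have hg0 : g ≠ 0 := (hg.trans_lt threshold_neg).ne
  rw [lam, if_pos hg]
  field_simp

theorem neg_inv_lt_lam_mul_self_of_lt {τ g : ℝ} (hτ : 0 < τ) (hg : -1 / τ ^ 2 < g) :
    -τ⁻¹ < lam τ g * g := by
  rw [lam, if_neg hg.not_ge]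
  calc -τ⁻¹ = τ * (-1 / τ ^ 2) := by field_simp
    _ < τ * g := mul_lt_mul_of_pos_left hg hτ

theorem neg_inv_le_lam_mul_self {τ : ℝ} (hτ : 0 < τ) (g : ℝ) : -τ⁻¹ ≤ lam τ g * g := by
  rcases le_or_gt g (-1 / τ ^ 2) with hg | hg
  · exact (lam_mul_self_of_le hτ.ne' hg).ge
  · exact (neg_inv_lt_lam_mul_self_of_lt hτ hg).le

theorem neg_sum_lam_mul_self_le_card_div {ι : Type*} {τ : ℝ} (hτ : 0 < τ) (s : Finset ι)
    (g : ι → ℝ) : -(∑ i ∈ s, lam τ (g i) * g i) ≤ #s / τ := by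
  have card_bound : #s • -τ⁻¹ ≤ ∑ i ∈ s, lam τ (g i) * g i :=
    s.card_nsmul_le_sum _ _ fun i _ => neg_inv_le_lam_mul_self hτ (g i)
  rwa [nsmul_eq_mul, mul_neg, ← div_eq_mul_inv, neg_le] at card_bound

theorem duality_gap_bound_general {ι : Type*} {τ η : ℝ} (hτ : 0 < τ) (hη : 0 ≤ η)
    (s : Finset ι) (g : ι → ℝ) {I Imax : ι → ℝ} (hImax : ∀ i ∈ s, I i ≤ Imax i) :
    -(∑ i ∈ s, lam τ (g i) * g i) + η * ∑ i ∈ s, I i ≤ #s / τ + η * ∑ i ∈ s, Imax i :=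
  add_le_add (neg_sum_lam_mul_self_le_card_div hτ s g)
    (mul_le_mul_of_nonneg_left (sum_le_sum hImax) hη)

/-- Duality gap bound (Theorem 2, quantitative core): with λ i = λ_τ(g i),
0 ≤ I i ≤ Imax i, the duality gap satisfies
-∑ λ i · g i + η·∑ I i ≤ m/τ + η·∑ Imax i. -/
theorem duality_gap_bound (τ η : ℝ) (hτ : 0 < τ) (hη : 0 ≤ η) (m : ℕ)
    (g I Imax : Fin m → ℝ) (hI0 : ∀ i, 0 ≤ I i) (hImax : ∀ i, I i ≤ Imax i) :
    -(∑ i, lam τ (g i) * g i) + η * ∑ i, I i ≤ (m : ℝ) / τ + η * ∑ i, Imax i := by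
  simpa only [card_univ, Fintype.card_fin] using
    duality_gap_bound_general hτ hη univ g fun i _ => hImax i
end

section
/- PCPO update performance lower bound, strictly feasible case (Theorem 3, case 1, quantitative form): let τ > 0, η ≥ 0, m ∈ ℕ, and f₀, f₁, L ∈ ℝ with f₁ - f₀ ≥ L. Let a, b : Fin m → ℝ with a i ≤ -1/τ² and b i ≤ -1/τ² for every i, let D, M : Fin m → ℝ with D i ≥ 0, M i > 0, b i - a i ≤ D i, and -(b i) ≥ M i for every i, and let I₀, I₁, Imax : Fin m → ℝ with I₁ i - I₀ i ≥ -(Imax i) for every i. Then (f₁ - ∑_i φ_τ(b i) + η·∑_i I₁ i) - (f₀ - ∑_i φ_τ(a i) + η·∑_i I₀ i) ≥ L - (1/τ)·∑_i log(1 + D i/M i) - η·∑_i Imax i. -/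
open Finset

/-!
The barrier `φ_τ` follows the logarithmic barrier `-(1/τ) log (-x)` up to `x = -1/τ²` and its
tangent line, of slope `τ`, from there on. Its slope is therefore positive and, on `x < 0`, at most
the slope of the logarithmic barrier. So an update from `a` down to `b ≤ a` does not raise `φ_τ`,
and an update from `a` up to `b < 0` raises it by at most
`(1/τ) log (a/b) = (1/τ) log (1 + (b - a)/(-b))`, whichever branches `a` and `b` lie in.
-/

section ExtendedLogBarrier

variable {τ : ℝ}

theorem neg_one_div_sq_neg (hτ : τ ≠ 0) : -1 / τ ^ 2 < 0 :=
  div_neg_of_neg_of_pos neg_one_lt_zero (sq_pos_of_ne_zero hτ)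

theorem phi_of_le {x : ℝ} (hx : x ≤ -1 / τ ^ 2) : phi τ x = -(1 / τ) * Real.log (-x) :=
  if_pos hx

theorem phi_of_ge (hτ : τ ≠ 0) {x : ℝ} (hx : -1 / τ ^ 2 ≤ x) :
    phi τ x = τ * x - (1 / τ) * Real.log (1 / τ ^ 2) + 1 / τ := by
  rcases hx.eq_or_lt with rfl | hlt
  · rw [phi_of_le le_rfl, neg_div, neg_neg]
    field_simp
    ring
  · exact if_neg hlt.not_ge

theorem phi_monotone (hτ : 0 < τ) : Monotone (phi τ) := by
  refine MonotoneOn.Iic_union_Ici (a := -1 / τ ^ 2) ?_ ?_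
  · intro x hx y hy hxy
    rw [phi_of_le hx, phi_of_le hy, neg_mul, neg_mul]
    have hy_pos : 0 < -y := neg_pos.2 (lt_of_le_of_lt hy (neg_one_div_sq_neg hτ.ne'))
    gcongr
  · intro x hx y hy hxy
    rw [phi_of_ge hτ.ne' hx, phi_of_ge hτ.ne' hy]
    gcongr

theorem sq_mul_sub_le_log_neg_sub_log_neg (hτ : τ ≠ 0) {x y : ℝ} (hx : -1 / τ ^ 2 ≤ x)
    (hxy : x ≤ y) (hy : y < 0) :
    τ ^ 2 * (y - x) ≤ Real.log (-x) - Real.log (-y) := by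
  have hx_neg : x < 0 := hxy.trans_lt hy
  have sq_le_inv : τ ^ 2 ≤ (-x)⁻¹ := by
    rw [le_inv_comm₀ (sq_pos_of_ne_zero hτ) (neg_pos.2 hx_neg), ← one_div]
    rw [neg_div] at hx
    exact neg_le.1 hx
  calc τ ^ 2 * (y - x) ≤ (-x)⁻¹ * (y - x) :=
        mul_le_mul_of_nonneg_right sq_le_inv (sub_nonneg.2 hxy)
    _ = 1 - (-x / -y)⁻¹ := by field_simp [hx_neg.ne, hy.ne]; ring
    _ ≤ Real.log (-x / -y) :=
        Real.one_sub_inv_le_log_of_pos (div_pos (neg_pos.2 hx_neg) (neg_pos.2 hy))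
    _ = Real.log (-x) - Real.log (-y) :=
        Real.log_div (neg_ne_zero.2 hx_neg.ne) (neg_ne_zero.2 hy.ne)

theorem phi_add_log_neg_antitoneOn (hτ : 0 < τ) :
    AntitoneOn (fun x ↦ phi τ x + (1 / τ) * Real.log (-x)) (Set.Iio 0) := by
  have hlog : AntitoneOn (fun x ↦ phi τ x + (1 / τ) * Real.log (-x)) (Set.Iic (-1 / τ ^ 2)) := by
    intro x hx y hy _
    simp only [phi_of_le hx, phi_of_le hy, neg_mul, neg_add_cancel, le_refl]
  have hlin : AntitoneOn (fun x ↦ phi τ x + (1 / τ) * Real.log (-x))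
      (Set.Ico (-1 / τ ^ 2) 0) := by
    intro x hx y hy hxy
    have hslope : τ * (y - x) ≤ (1 / τ) * (Real.log (-x) - Real.log (-y)) :=
      calc τ * (y - x) = (1 / τ) * (τ ^ 2 * (y - x)) := by field_simp
        _ ≤ _ := by gcongr; exact sq_mul_sub_le_log_neg_sub_log_neg hτ.ne' hx.1 hxy hy.2
    simp only [phi_of_ge hτ.ne' hx.1, phi_of_ge hτ.ne' hy.1]
    linarith
  have hneg := neg_one_div_sq_neg hτ.ne'
  rw [← Set.Iic_union_Ico_eq_Iio hneg]
  exact hlog.union_right hlin isGreatest_Iic (isLeast_Ico hneg)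

theorem phi_sub_phi_le_log_div (hτ : 0 < τ) {a b : ℝ} (hab : a ≤ b) (hb : b < 0) :
    phi τ b - phi τ a ≤ (1 / τ) * Real.log (a / b) := by
  have ha : a < 0 := hab.trans_lt hb
  have hanti := phi_add_log_neg_antitoneOn hτ ha hb hab
  rw [Real.log_div ha.ne hb.ne, ← Real.log_neg_eq_log a, ← Real.log_neg_eq_log b]
  linarith

theorem phi_sub_phi_le_log_one_add_div (hτ : 0 < τ) {a b D M : ℝ} (hD : 0 ≤ D) (hM : 0 < M)
    (hba : b - a ≤ D) (hbM : M ≤ -b) :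
    phi τ b - phi τ a ≤ (1 / τ) * Real.log (1 + D / M) := by
  have hb : b < 0 := neg_pos.1 (hM.trans_le hbM)
  rcases le_total a b with hab | hab
  · have hratio : a / b ≤ 1 + D / M :=
      calc a / b = 1 + (b - a) / -b := by field_simp [hb.ne]; ring
        _ ≤ 1 + D / M := by gcongr
    calc phi τ b - phi τ a ≤ (1 / τ) * Real.log (a / b) := phi_sub_phi_le_log_div hτ hab hb
      _ ≤ (1 / τ) * Real.log (1 + D / M) := by
        have : 0 < a / b := div_pos_of_neg_of_neg (hab.trans_lt hb) hb
        gcongr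
  · calc phi τ b - phi τ a ≤ 0 := sub_nonpos.2 (phi_monotone hτ hab)
      _ ≤ (1 / τ) * Real.log (1 + D / M) :=
        mul_nonneg (one_div_pos.2 hτ).le
          (Real.log_nonneg (le_add_of_nonneg_right (div_nonneg hD hM.le)))

end ExtendedLogBarrier

theorem pcpo_update_lower_bound_feasible_general {ι : Type*} [Fintype ι] {τ η : ℝ}
    (hτ : 0 < τ) (hη : 0 ≤ η) {f₀ f₁ L : ℝ} (hf : L ≤ f₁ - f₀) {a b D M : ι → ℝ}
    (hD : ∀ i, 0 ≤ D i) (hM : ∀ i, 0 < M i)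
    (hba : ∀ i, b i - a i ≤ D i) (hbM : ∀ i, M i ≤ -(b i))
    {I₀ I₁ Imax : ι → ℝ} (hI : ∀ i, -(Imax i) ≤ I₁ i - I₀ i) :
    L - (1 / τ) * ∑ i, Real.log (1 + D i / M i) - η * ∑ i, Imax i ≤
      (f₁ - ∑ i, phi τ (b i) + η * ∑ i, I₁ i) - (f₀ - ∑ i, phi τ (a i) + η * ∑ i, I₀ i) := by
  have hbarrier : ∑ i, phi τ (b i) - ∑ i, phi τ (a i) ≤
      (1 / τ) * ∑ i, Real.log (1 + D i / M i) := by
    rw [← sum_sub_distrib, mul_sum]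
    exact sum_le_sum fun i _ ↦ phi_sub_phi_le_log_one_add_div hτ (hD i) (hM i) (hba i) (hbM i)
  have hintrinsic : -∑ i, Imax i ≤ ∑ i, I₁ i - ∑ i, I₀ i := by
    rw [← sum_sub_distrib, ← sum_neg_distrib]
    exact sum_le_sum fun i _ ↦ hI i
  have hweighted := mul_le_mul_of_nonneg_left hintrinsic hη
  linarith

/-- PCPO update performance lower bound, strictly feasible case (Theorem 3,
case 1, quantitative form). -/
theorem pcpo_update_lower_bound_feasible (τ η : ℝ) (hτ : 0 < τ) (hη : 0 ≤ η)
    (m : ℕ) (f₀ f₁ L : ℝ) (hf : f₁ - f₀ ≥ L)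
    (a b D M : Fin m → ℝ)
    (ha : ∀ i, a i ≤ -1 / τ ^ 2) (hb : ∀ i, b i ≤ -1 / τ ^ 2)
    (hD : ∀ i, 0 ≤ D i) (hM : ∀ i, 0 < M i)
    (hba : ∀ i, b i - a i ≤ D i) (hbM : ∀ i, M i ≤ -(b i))
    (I₀ I₁ Imax : Fin m → ℝ) (hI : ∀ i, I₁ i - I₀ i ≥ -(Imax i)) :
    (f₁ - ∑ i, phi τ (b i) + η * ∑ i, I₁ i)
      - (f₀ - ∑ i, phi τ (a i) + η * ∑ i, I₀ i) ≥
    L - (1 / τ) * ∑ i, Real.log (1 + D i / M i) - η * ∑ i, Imax i :=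
  pcpo_update_lower_bound_feasible_general hτ hη hf hD hM hba hbM hI
end

section
/- PCPO update performance lower bound, near-boundary case (Theorem 3, case 2, quantitative form): let τ > 0, η ≥ 0, m ∈ ℕ, and f₀, f₁, L ∈ ℝ with f₁ - f₀ ≥ L. Let a, b : Fin m → ℝ with a i ≥ -1/τ² and b i ≥ -1/τ² for every i, let D : Fin m → ℝ with b i - a i ≤ D i for every i, and let I₀, I₁, Imax : Fin m → ℝ with I₁ i - I₀ i ≥ -(Imax i) for every i. Then (f₁ - ∑_i φ_τ(b i) + η·∑_i I₁ i) - (f₀ - ∑_i φ_τ(a i) + η·∑_i I₀ i) ≥ L - τ·∑_i D i - η·∑_i Imax i. -/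
open Finset

/-!
The affine branch of `φ_τ` is the tangent line of the logarithmic branch at the junction
`-1/τ²`, and the logarithmic branch is convex, so it lies above that line. Hence
`φ_τ y - φ_τ x ≤ τ (y - x)` for every `x` and every `y` in the affine region.
Summing over the constraints bounds the change of the barrier term.
-/

/-- The tangent line of the logarithmic barrier `x ↦ -(1/τ) log (-x)` at `x = -1/τ²`, which
`phi τ` follows to the right of that point. -/
noncomputable def phiTangent (τ x : ℝ) : ℝ :=
  τ * x - (1 / τ) * Real.log (1 / τ ^ 2) + 1 / τ

lemma phiTangent_sub (τ x y : ℝ) : phiTangent τ y - phiTangent τ x = τ * (y - x) := by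
  unfold phiTangent
  ring

lemma phiTangent_le_neg_log {τ x : ℝ} (hτ : 0 < τ) (hx : x < 0) :
    phiTangent τ x ≤ -(1 / τ) * Real.log (-x) := by
  have log_le : Real.log (-x) - Real.log (1 / τ ^ 2) ≤ τ ^ 2 * -x - 1 :=
    calc Real.log (-x) - Real.log (1 / τ ^ 2)
        = Real.log (-x / (1 / τ ^ 2)) :=
          (Real.log_div (neg_pos.2 hx).ne' (by positivity)).symm
      _ = Real.log (τ ^ 2 * -x) := by rw [div_div_eq_mul_div, div_one, mul_comm]
      _ ≤ τ ^ 2 * -x - 1 :=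
          Real.log_le_sub_one_of_pos (mul_pos (pow_pos hτ 2) (neg_pos.2 hx))
  calc phiTangent τ x
      = -(1 / τ) * (τ ^ 2 * -x - 1 + Real.log (1 / τ ^ 2)) := by
        unfold phiTangent
        field_simp
        ring
    _ ≤ -(1 / τ) * Real.log (-x) :=
        mul_le_mul_of_nonpos_left (sub_le_iff_le_add.1 log_le)
          (neg_nonpos.2 (one_div_pos.2 hτ).le)

lemma phiTangent_le_phi {τ : ℝ} (hτ : 0 < τ) (x : ℝ) : phiTangent τ x ≤ phi τ x := by
  unfold phi
  split_ifs with hx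
  · exact phiTangent_le_neg_log hτ
      (hx.trans_lt (div_neg_of_neg_of_pos neg_one_lt_zero (pow_pos hτ 2)))
  · exact le_rfl

lemma phi_eq_phiTangent {τ x : ℝ} (hτ : τ ≠ 0) (hx : -1 / τ ^ 2 ≤ x) :
    phi τ x = phiTangent τ x := by
  rcases hx.eq_or_lt with rfl | hx
  · have slope_mul : τ * (-1 / τ ^ 2) = -(1 / τ) := by field_simp
    rw [phi, if_pos le_rfl, phiTangent, slope_mul, neg_div, neg_neg]
    ring
  · rw [phi, if_neg hx.not_ge, phiTangent]

lemma phi_sub_phi_le {τ y : ℝ} (hτ : 0 < τ) (x : ℝ) (hy : -1 / τ ^ 2 ≤ y) :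
    phi τ y - phi τ x ≤ τ * (y - x) :=
  calc phi τ y - phi τ x
      ≤ phiTangent τ y - phiTangent τ x :=
        sub_le_sub (phi_eq_phiTangent hτ.ne' hy).le (phiTangent_le_phi hτ x)
    _ = τ * (y - x) := phiTangent_sub τ x y

lemma sum_phi_sub_sum_phi_le {ι : Type*} {s : Finset ι} {τ : ℝ} (hτ : 0 < τ) {a b D : ι → ℝ}
    (hb : ∀ i ∈ s, -1 / τ ^ 2 ≤ b i) (hba : ∀ i ∈ s, b i - a i ≤ D i) :
    ∑ i ∈ s, phi τ (b i) - ∑ i ∈ s, phi τ (a i) ≤ τ * ∑ i ∈ s, D i := by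
  rw [← sum_sub_distrib, mul_sum]
  exact sum_le_sum fun i hi =>
    (phi_sub_phi_le hτ (a i) (hb i hi)).trans (mul_le_mul_of_nonneg_left (hba i hi) hτ.le)

theorem pcpo_update_lower_bound_boundary_general {ι : Type*} (s : Finset ι) {τ η : ℝ}
    (hτ : 0 < τ) (hη : 0 ≤ η) {f₀ f₁ L : ℝ} (hf : L ≤ f₁ - f₀) {a b D : ι → ℝ}
    (hb : ∀ i ∈ s, -1 / τ ^ 2 ≤ b i) (hba : ∀ i ∈ s, b i - a i ≤ D i)
    {I₀ I₁ Imax : ι → ℝ} (hI : ∀ i ∈ s, -Imax i ≤ I₁ i - I₀ i) :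
    L - τ * ∑ i ∈ s, D i - η * ∑ i ∈ s, Imax i ≤
      (f₁ - ∑ i ∈ s, phi τ (b i) + η * ∑ i ∈ s, I₁ i)
        - (f₀ - ∑ i ∈ s, phi τ (a i) + η * ∑ i ∈ s, I₀ i) := by
  have barrier_le := sum_phi_sub_sum_phi_le hτ hb hba
  have intrinsic_ge : -∑ i ∈ s, Imax i ≤ ∑ i ∈ s, I₁ i - ∑ i ∈ s, I₀ i := by
    rw [← sum_sub_distrib, ← sum_neg_distrib]
    exact sum_le_sum hI
  have weighted_intrinsic_ge := mul_le_mul_of_nonneg_left intrinsic_ge hη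
  linarith

/-- PCPO update performance lower bound, near-boundary case (Theorem 3,
case 2, quantitative form). -/
theorem pcpo_update_lower_bound_boundary (τ η : ℝ) (hτ : 0 < τ) (hη : 0 ≤ η)
    (m : ℕ) (f₀ f₁ L : ℝ) (hf : f₁ - f₀ ≥ L)
    (a b D : Fin m → ℝ)
    (ha : ∀ i, a i ≥ -1 / τ ^ 2) (hb : ∀ i, b i ≥ -1 / τ ^ 2)
    (hba : ∀ i, b i - a i ≤ D i)
    (I₀ I₁ Imax : Fin m → ℝ) (hI : ∀ i, I₁ i - I₀ i ≥ -(Imax i)) :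
    (f₁ - ∑ i, phi τ (b i) + η * ∑ i, I₁ i)
      - (f₀ - ∑ i, phi τ (a i) + η * ∑ i, I₀ i) ≥
    L - τ * ∑ i, D i - η * ∑ i, Imax i :=
  pcpo_update_lower_bound_boundary_general univ hτ hη hf (fun i _ => hb i) (fun i _ => hba i)
    fun i _ => hI i
end
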